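/- Let d ≥ 1 and let P : ℝ^d∖{0} → ℝ be smooth. Assume that the pushforward ν of the Lebesgue measure on ℝ^d under the gradient map ξ ↦ ∇P(ξ) is absolutely continuous with respect to the Lebesgue measure on ℝ^d. Let E ⊆ ℝ^d be a measurable set whose topological boundary ∂E has Lebesgue measure zero. Then for every u₀ ∈ L²(ℝ^d), ‖1_E(·/t) · u(t) − M_E u(t)‖_{L²(ℝ^d)} → 0 as t → +∞ and as t → −∞, where u(t) = e^{itP(D_x)}u₀, the first term is the pointwise multiplication x ↦ 1_E(x/t) u(t,x), and M_E is the bounded operator on L²(ℝ^d) acting on the Fourier side as multiplication by ξ ↦ 1_E(−∇P(ξ)). -/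

import Mathlib

open MeasureTheory Filter Topology
open scoped RealInnerProductSpace ENNReal Classical

noncomputable section

abbrev Euc (d : ℕ) := EuclideanSpace ℝ (Fin d)

/-- Fourier transform `f̂(ξ) = ∫ e^{-i x·ξ} f(x) dx`. -/
def FT {d : ℕ} (f : Euc d → ℂ) (ξ : Euc d) : ℂ :=
  ∫ x : Euc d, Complex.exp (-(Complex.I * ((⟪x, ξ⟫ : ℝ) : ℂ))) * f x

/-- `v` is the (distributional) Fourier transform of `u`. -/
def IsFourierTransformOf {d : ℕ} (u v : Euc d → ℂ) : Prop :=
  ∀ g : SchwartzMap (Euc d) ℂ, ∫ ξ : Euc d, v ξ * g ξ = ∫ x : Euc d, u x * FT (⇑g) x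

/-!
The law of `x / t` under `|u(t, x)|² dx` has characteristic function at `a` the autocorrelation of
the spectrum `e^{itP} F` at lag `a / t`, by Plancherel and because modulating `u` by `e^{i x·a/t}`
translates its Fourier transform. In the autocorrelation the phases combine to a difference quotient
of `P`, so as `|t| → ∞` it converges to the characteristic function of the law of `-∇P(ξ)` under
`|F|² dξ / (2π)^d`. By Lévy's theorem the laws converge weakly, and the portmanteau theorem shows
that no mass of `u(t)` is left in `{x / t ∈ C}` when `C` is closed and `F` vanishes on `{-∇P ∈ C}`.
This is applied to `M_E u` with `C = closure Eᶜ` and to `u - M_E u` with `C = closure E`; the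
frontier of `E` is invisible to `-∇P` by absolute continuity.
-/

section Lp

variable {α ι E : Type*} [MeasurableSpace α] {μ : Measure α} {l : Filter ι} [NormedAddCommGroup E]

theorem tendsto_eLpNorm_zero_of_dominated [l.IsCountablyGenerated] {p : ℝ≥0∞} (hp : p ≠ ∞)
    {f : ι → α → E} {bound : α → ℝ} (hbound : MemLp bound p μ)
    (hf : ∀ i, AEStronglyMeasurable (f i) μ) (hle : ∀ i, ∀ᵐ x ∂μ, ‖f i x‖ ≤ bound x)
    (hlim : ∀ᵐ x ∂μ, Tendsto (fun i => f i x) l (𝓝 0)) :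
    Tendsto (fun i => eLpNorm (f i) p μ) l (𝓝 0) := by
  rcases eq_or_ne p 0 with rfl | hp₀
  · simpa only [eLpNorm_exponent_zero] using tendsto_const_nhds
  have hp_pos : 0 < p.toReal := ENNReal.toReal_pos hp₀ hp
  simp_rw [eLpNorm_eq_lintegral_rpow_enorm_toReal hp₀ hp]
  suffices Tendsto (fun i => ∫⁻ x, ‖f i x‖ₑ ^ p.toReal ∂μ) l (𝓝 0) by
    simpa [hp_pos] using this.ennrpow_const (1 / p.toReal)
  refine tendsto_of_seq_tendsto fun i hi => ?_
  simpa [Function.comp_def] using tendsto_lintegral_of_dominated_convergence' (f := fun _ => 0)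
    (fun x => ‖bound x‖ₑ ^ p.toReal) (fun n => (hf (i n)).enorm.pow_const _)
    (fun n => (hle (i n)).mono fun x hx =>
      ENNReal.rpow_le_rpow (enorm_le_iff_norm_le.2 (hx.trans (Real.le_norm_self _))) hp_pos.le)
    (lintegral_rpow_enorm_lt_top_of_eLpNorm_lt_top hp₀ hp hbound.2).ne
    (hlim.mono fun x hx => by
      simpa [hp_pos] using (hx.comp hi).enorm.ennrpow_const p.toReal)

theorem tendsto_eLpNorm_comp_sub_right_sub_self {G : Type*} [AddGroup G] [TopologicalSpace G]
    [IsTopologicalAddGroup G] [MeasurableSpace G] [BorelSpace G] {μ : Measure G}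
    [μ.IsAddRightInvariant] [IsLocallyFiniteMeasure μ] [μ.InnerRegularCompactLTTop]
    {p : ℝ≥0∞} [Fact (1 ≤ p)] (hp : p ≠ ∞) {f : G → E} (hf : MemLp f p μ)
    {b : ι → G} (hb : Tendsto b l (𝓝 0)) :
    Tendsto (fun i => eLpNorm ((fun x => f (x - b i)) - f) p μ) l (𝓝 0) := by
  let T : C(G, C(G, G)) := (ContinuousMap.mk (fun a : G × G => a.2 - a.1) (by fun_prop)).curry
  have hT (a : G) : MeasurePreserving (T a) μ μ := measurePreserving_sub_right μ a
  have hlim := (tendsto_const_nhds (x := hf.toLp f) (f := l)).compMeasurePreservingLp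
    ((T.continuous.tendsto 0).comp hb) (fun i => hT (b i)) (hT 0) hp
  have hT₀ : f ∘ T 0 = f := by ext; simp [T]
  simp only [Function.comp_apply, Lp.toLp_compMeasurePreserving,
    Lp.tendsto_Lp_iff_tendsto_eLpNorm'', hT₀] at hlim
  exact hlim

theorem memLp_indicator₀ {p : ℝ≥0∞} {f : α → E} (hf : MemLp f p μ) {s : Set α}
    (hs : NullMeasurableSet s μ) : MemLp (s.indicator f) p μ :=
  hf.of_le (hf.1.indicator₀ hs) (.of_forall fun _ => norm_indicator_le_norm_self _ _)

theorem eLpNorm_indicator_sub_le {p : ℝ≥0∞} (hp : 1 ≤ p) {f g : α → E}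
    (hf : AEStronglyMeasurable f μ) (hg : AEStronglyMeasurable g μ) {s A B : Set α}
    (hA : MeasurableSet A) (hB : MeasurableSet B) (hsA : s ⊆ A) (hsB : sᶜ ⊆ B) :
    eLpNorm (s.indicator f - g) p μ ≤
      eLpNorm (A.indicator (f - g)) p μ + eLpNorm (B.indicator g) p μ := by
  rw [← eLpNorm_norm (A.indicator _), ← eLpNorm_norm (B.indicator _)]
  refine (eLpNorm_mono_real fun x => ?_).trans
    (eLpNorm_add_le ((hf.sub hg).indicator hA).norm (hg.indicator hB).norm hp)
  by_cases hx : x ∈ s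
  · simp [hx, hsA hx]
  · simp [hx, hsB hx]

variable {𝕜 : Type*} [RCLike 𝕜] [InnerProductSpace 𝕜 E]

theorem integral_inner_eq_inner_toLp {f g : α → E} (hf : MemLp f 2 μ) (hg : MemLp g 2 μ) :
    ∫ x, inner 𝕜 (f x) (g x) ∂μ = inner 𝕜 (hf.toLp f) (hg.toLp g) := by
  rw [L2.inner_def]
  refine integral_congr_ae ?_
  filter_upwards [hf.coeFn_toLp, hg.coeFn_toLp] with x hfx hgx
  rw [hfx, hgx]

theorem tendsto_integral_inner {f g : ι → α → E} {f₀ g₀ : α → E} (hf : ∀ i, MemLp (f i) 2 μ)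
    (hg : ∀ i, MemLp (g i) 2 μ) (hf₀ : MemLp f₀ 2 μ) (hg₀ : MemLp g₀ 2 μ)
    (hflim : Tendsto (fun i => eLpNorm (f i - f₀) 2 μ) l (𝓝 0))
    (hglim : Tendsto (fun i => eLpNorm (g i - g₀) 2 μ) l (𝓝 0)) :
    Tendsto (fun i => ∫ x, inner 𝕜 (f i x) (g i x) ∂μ) l (𝓝 (∫ x, inner 𝕜 (f₀ x) (g₀ x) ∂μ)) := by
  simp_rw [fun i => integral_inner_eq_inner_toLp (𝕜 := 𝕜) (hf i) (hg i),
    integral_inner_eq_inner_toLp (𝕜 := 𝕜) hf₀ hg₀]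
  exact ((Lp.tendsto_Lp_iff_tendsto_eLpNorm'' f hf f₀ hf₀).2 hflim).inner
    ((Lp.tendsto_Lp_iff_tendsto_eLpNorm'' g hg g₀ hg₀).2 hglim)

end Lp

section WeakConvergence

variable {V : Type*} [NormedAddCommGroup V] [InnerProductSpace ℝ V] [FiniteDimensional ℝ V]
  [MeasurableSpace V] [BorelSpace V] {ι : Type*} {l : Filter ι} [l.IsCountablyGenerated]

/- Lévy's theorem is available for sequences of probability measures; the value of the
characteristic function at `0` is the total mass, which reduces to that case by normalization. -/
theorem tendsto_finiteMeasure_of_tendsto_charFun {μ : ι → FiniteMeasure V} {ν : FiniteMeasure V}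
    (h : ∀ a, Tendsto (fun i => charFun (μ i : Measure V) a) l (𝓝 (charFun (ν : Measure V) a))) :
    Tendsto μ l (𝓝 ν) := by
  have charFun_zero_eq_mass (ρ : FiniteMeasure V) : charFun (ρ : Measure V) 0 = (ρ.mass : ℝ) := by
    rw [charFun_zero]; rfl
  have hmass : Tendsto (fun i => (μ i).mass) l (𝓝 ν.mass) := by
    have hzero := (Complex.continuous_re.tendsto _).comp (h 0)
    simpa only [Function.comp_def, charFun_zero_eq_mass, Complex.ofReal_re,
      NNReal.tendsto_coe] using hzero
  rcases eq_or_ne ν 0 with rfl | hν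
  · exact FiniteMeasure.tendsto_zero_of_tendsto_zero_mass (by simpa using hmass)
  refine FiniteMeasure.tendsto_of_tendsto_normalize_testAgainstNN_of_tendsto_mass
    (tendsto_of_seq_tendsto fun i hi => ProbabilityMeasure.tendsto_of_tendsto_charFun fun a => ?_)
    hmass
  have charFun_normalize {ρ : FiniteMeasure V} (hρ : ρ ≠ 0) :
      charFun (ρ.normalize : Measure V) a = (ρ.mass⁻¹ : ℝ) * charFun (ρ : Measure V) a := by
    rw [ρ.toMeasure_normalize_eq_of_nonzero hρ, charFun_apply, integral_smul_nnreal_measure,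
      charFun_apply, NNReal.smul_def, Complex.real_smul, NNReal.coe_inv]
  have hν_mass : ν.mass ≠ 0 := ν.mass_nonzero_iff.2 hν
  rw [charFun_normalize hν]
  have hlim : Tendsto (fun i => ((μ i).mass⁻¹ : ℝ) * charFun (μ i : Measure V) a) l
      (𝓝 ((ν.mass⁻¹ : ℝ) * charFun (ν : Measure V) a)) :=
    ((Complex.continuous_ofReal.tendsto _).comp
      ((NNReal.tendsto_coe.2 hmass).inv₀ (NNReal.coe_ne_zero.2 hν_mass))).mul (h a)
  refine (hlim.comp hi).congr' ?_
  filter_upwards [(hmass.comp hi).eventually_ne hν_mass] with n hn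
  exact (charFun_normalize ((μ (i n)).mass_nonzero_iff.1 hn)).symm

theorem tendsto_measure_zero_of_tendsto_charFun {μ : ι → Measure V} [∀ i, IsFiniteMeasure (μ i)]
    {ν : Measure V} [IsFiniteMeasure ν]
    (h : ∀ a : V, Tendsto (fun i => charFun (μ i) a) l (𝓝 (charFun ν a)))
    {C : Set V} (hC : IsClosed C) (hνC : ν C = 0) : Tendsto (fun i => μ i C) l (𝓝 0) := by
  let μ' (i : ι) : FiniteMeasure V := ⟨μ i, inferInstance⟩
  let ν' : FiniteMeasure V := ⟨ν, inferInstance⟩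
  have hlim : Tendsto μ' l (𝓝 ν') := tendsto_finiteMeasure_of_tendsto_charFun h
  refine tendsto_of_le_liminf_of_limsup_le zero_le ?_
  exact (FiniteMeasure.limsup_measure_closed_le_of_tendsto hlim hC).trans hνC.le

end WeakConvergence

section Density

variable {α : Type*} [MeasurableSpace α] {μ : Measure α}

/-- The measure `|f|² dμ`, i.e. the (unnormalized) law of the position of a particle with wave
function `f`. -/
def bornMeasure (μ : Measure α) (f : α → ℂ) : Measure α := μ.withDensity fun x => ‖f x‖ₑ ^ 2

theorem bornMeasure_apply (f : α → ℂ) {s : Set α} (hs : MeasurableSet s) :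
    bornMeasure μ f s = eLpNorm (s.indicator f) 2 μ ^ 2 := by
  have h := eLpNorm_nnreal_pow_eq_lintegral (p := 2) (f := s.indicator f) (μ := μ) two_ne_zero
  norm_num at h
  rw [bornMeasure, withDensity_apply _ hs, h, ← lintegral_indicator hs]
  refine lintegral_congr fun x => ?_
  by_cases hx : x ∈ s <;> simp [hx]

theorem isFiniteMeasure_bornMeasure {f : α → ℂ} (hf : MemLp f 2 μ) :
    IsFiniteMeasure (bornMeasure μ f) := by
  refine ⟨?_⟩
  rw [bornMeasure_apply f .univ, Set.indicator_univ]
  exact ENNReal.pow_lt_top hf.2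

theorem bornMeasure_eq_zero {f : α → ℂ} {s : Set α} (hs : NullMeasurableSet s μ)
    (hf : ∀ᵐ x ∂μ, x ∈ s → f x = 0) : bornMeasure μ f s = 0 := by
  rw [bornMeasure, withDensity_apply₀ _ hs]
  refine lintegral_eq_zero_of_ae_eq_zero ?_
  filter_upwards [ae_restrict_of_ae hf, ae_restrict_mem₀ hs] with x hfx hx
  simp [hfx hx]

theorem charFun_map_bornMeasure {V : Type*} [NormedAddCommGroup V] [InnerProductSpace ℝ V]
    [MeasurableSpace V] [BorelSpace V] [SecondCountableTopology V] {f : α → ℂ}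
    (hf : AEStronglyMeasurable f μ) {φ : α → V} (hφ : AEMeasurable φ μ) (a : V) :
    charFun ((bornMeasure μ f).map φ) a =
      ∫ x, inner ℂ (f x) (Complex.exp (Complex.I * (⟪φ x, a⟫ : ℝ)) * f x) ∂μ := by
  have hφ' : AEMeasurable φ (bornMeasure μ f) :=
    hφ.mono_ac (withDensity_absolutelyContinuous _ _)
  rw [charFun_apply, integral_map hφ' (by fun_prop), bornMeasure,
    integral_withDensity_eq_integral_toReal_smul₀ (hf.enorm.pow_const 2)
      (.of_forall fun x => by finiteness)]
  refine integral_congr_ae (.of_forall fun x => ?_)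
  simp only [ENNReal.toReal_pow, toReal_enorm, RCLike.inner_apply, Complex.real_smul,
    Complex.ofReal_pow, ← Complex.mul_conj']
  ring_nf

end Density

section Autocorrelation

theorem isCountablyGenerated_cobounded {V : Type*} [SeminormedAddGroup V] :
    (Bornology.cobounded V).IsCountablyGenerated :=
  comap_norm_atTop (E := V) ▸ inferInstance

theorem memLp_exp_I_mul {α : Type*} [MeasurableSpace α] {μ : Measure α} {p : ℝ≥0∞} {f : α → ℂ}
    (hf : MemLp f p μ) {r : α → ℝ} (hr : AEMeasurable r μ) :
    MemLp (fun x => Complex.exp (Complex.I * r x) * f x) p μ := by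
  have hexp : AEStronglyMeasurable (fun x => Complex.exp (Complex.I * r x)) μ :=
    (by fun_prop : AEMeasurable _ μ).aestronglyMeasurable
  refine hf.of_le (hexp.mul hf.1) (.of_forall fun x => ?_)
  rw [norm_mul, Complex.norm_exp_I_mul_ofReal, one_mul]

theorem tendsto_eLpNorm_exp_I_mul_sub {α ι : Type*} [MeasurableSpace α] {μ : Measure α}
    {l : Filter ι} [l.IsCountablyGenerated] {p : ℝ≥0∞} (hp : p ≠ ∞) {f : α → ℂ} (hf : MemLp f p μ)
    {r : ι → α → ℝ} {r₀ : α → ℝ} (hr : ∀ i, AEMeasurable (r i) μ) (hr₀ : AEMeasurable r₀ μ)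
    (hlim : ∀ᵐ x ∂μ, Tendsto (fun i => r i x) l (𝓝 (r₀ x))) :
    Tendsto (fun i => eLpNorm ((fun x => Complex.exp (Complex.I * r i x) * f x) -
      fun x => Complex.exp (Complex.I * r₀ x) * f x) p μ) l (𝓝 0) := by
  refine tendsto_eLpNorm_zero_of_dominated hp (hf.norm.const_mul 2)
    (fun i => ((memLp_exp_I_mul hf (hr i)).sub (memLp_exp_I_mul hf hr₀)).1)
    (fun i => .of_forall fun x => ?_) ?_
  · refine (norm_sub_le _ _).trans_eq ?_
    simp only [norm_mul, Complex.norm_exp_I_mul_ofReal]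
    ring
  · filter_upwards [hlim] with x hx
    have hcont : Continuous fun s : ℝ => Complex.exp (Complex.I * s) * f x := by fun_prop
    exact tendsto_sub_nhds_zero_iff.2 ((hcont.tendsto _).comp hx)

theorem inner_exp_I_mul_left (r : ℝ) (z w : ℂ) :
    inner ℂ (Complex.exp (Complex.I * r) * z) w =
      inner ℂ z (Complex.exp (Complex.I * (-r : ℝ)) * w) := by
  simp only [RCLike.inner_apply, map_mul, ← Complex.exp_conj, Complex.conj_I, Complex.conj_ofReal,
    Complex.ofReal_neg, mul_neg, neg_mul]
  ring

/-- The Fourier transform of `e^{itP(D)}u₀`, where `F` is the Fourier transform of `u₀`. -/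
def evolvedSpectrum {V : Type*} (P : V → ℝ) (F : V → ℂ) (t : ℝ) (ξ : V) : ℂ :=
  Complex.exp (Complex.I * ((t * P ξ : ℝ) : ℂ)) * F ξ

theorem memLp_evolvedSpectrum {α : Type*} [MeasurableSpace α] {μ : Measure α} {P : α → ℝ}
    {F : α → ℂ} {p : ℝ≥0∞} (hP : AEMeasurable P μ) (hF : MemLp F p μ) (t : ℝ) :
    MemLp (evolvedSpectrum P F t) p μ :=
  memLp_exp_I_mul hF (hP.const_mul t)

theorem inner_evolvedSpectrum {α : Type*} (P : α → ℝ) (F : α → ℂ) (t : ℝ) (ξ η : α) :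
    inner ℂ (evolvedSpectrum P F t ξ) (evolvedSpectrum P F t η) =
      inner ℂ (Complex.exp (Complex.I * (-(t * (P η - P ξ)) : ℝ)) * F ξ) (F η) := by
  simp only [evolvedSpectrum, inner_exp_I_mul_left, ← mul_assoc, ← Complex.exp_add]
  congr 3
  push_cast
  ring

variable {V : Type*} [NormedAddCommGroup V] [NormedSpace ℝ V] {P : V → ℝ}

theorem tendsto_slope_sub_inv_smul {ξ : V} (hP : DifferentiableAt ℝ P ξ) (a : V) :
    Tendsto (fun t : ℝ => t * (P (ξ - t⁻¹ • a) - P ξ)) (Bornology.cobounded ℝ)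
      (𝓝 (fderiv ℝ P ξ (-a))) := by
  simpa only [smul_eq_mul, smul_neg, ← sub_eq_add_neg] using
    hP.hasFDerivAt.lim (-a) tendsto_norm_cobounded_atTop

variable [MeasurableSpace V] [BorelSpace V] {μ : Measure V}

theorem aemeasurable_of_ae_differentiableAt (hP : ∀ᵐ ξ ∂μ, DifferentiableAt ℝ P ξ) :
    AEMeasurable P μ := by
  have hcont : ContinuousOn P {ξ | DifferentiableAt ℝ P ξ} :=
    fun ξ hξ => (DifferentiableAt.continuousAt hξ).continuousWithinAt
  have h := hcont.aemeasurable (μ := μ) (measurableSet_of_differentiableAt ℝ P)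
  rwa [Measure.restrict_eq_self_of_ae_mem (s := {ξ | DifferentiableAt ℝ P ξ}) hP] at h

/- Only the phase difference `t (P (ξ - t⁻¹ a) - P ξ)` survives in the autocorrelation at lag
`t⁻¹ a`; it converges although the phases themselves oscillate ever faster. -/
theorem tendsto_autocorrelation_evolvedSpectrum [FiniteDimensional ℝ V] [μ.IsAddHaarMeasure]
    {F : V → ℂ} (hP : ∀ᵐ ξ ∂μ, DifferentiableAt ℝ P ξ) (hF : MemLp F 2 μ) (a : V) :
    Tendsto (fun t : ℝ => ∫ ξ, inner ℂ (evolvedSpectrum P F t ξ)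
        (evolvedSpectrum P F t (ξ - t⁻¹ • a)) ∂μ) (Bornology.cobounded ℝ)
      (𝓝 (∫ ξ, inner ℂ (F ξ) (Complex.exp (Complex.I * (fderiv ℝ P ξ (-a) : ℝ)) * F ξ) ∂μ)) := by
  have := isCountablyGenerated_cobounded (V := ℝ)
  have hPm := aemeasurable_of_ae_differentiableAt hP
  have hshift (t : ℝ) : MeasurePreserving (fun ξ => ξ - t⁻¹ • a) μ μ :=
    measurePreserving_sub_right μ _
  have hphase (t : ℝ) : AEMeasurable (fun ξ => -(t * (P (ξ - t⁻¹ • a) - P ξ))) μ :=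
    (((hPm.comp_quasiMeasurePreserving (hshift t).quasiMeasurePreserving).sub hPm).const_mul t).neg
  have hphase₀ : AEMeasurable (fun ξ => -fderiv ℝ P ξ (-a)) μ :=
    (measurable_fderiv_apply_const ℝ P (-a)).neg.aemeasurable
  have hphase_lim := tendsto_eLpNorm_exp_I_mul_sub (by simp) hF hphase hphase₀
    (hP.mono fun ξ hξ => (tendsto_slope_sub_inv_smul hξ a).neg)
  have hshift_lim : Tendsto (fun t : ℝ => eLpNorm ((fun ξ => F (ξ - t⁻¹ • a)) - F) 2 μ)
      (Bornology.cobounded ℝ) (𝓝 0) :=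
    tendsto_eLpNorm_comp_sub_right_sub_self (by simp) hF
      (by simpa only [zero_smul] using (tendsto_inv₀_cobounded (α := ℝ)).smul_const a)
  have h := tendsto_integral_inner (𝕜 := ℂ) (fun t => memLp_exp_I_mul hF (hphase t))
    (fun t => hF.comp_measurePreserving (hshift t)) (memLp_exp_I_mul hF hphase₀) hF
    hphase_lim hshift_lim
  simp only [inner_evolvedSpectrum]
  simpa only [inner_exp_I_mul_left, neg_neg, Function.comp_apply] using h

end Autocorrelation

section FourierTransform

open FourierTransform Real

variable {d : ℕ} {u v u' v' : Euc d → ℂ}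

theorem memLp_comp_smul {V E : Type*} [NormedAddCommGroup V] [NormedSpace ℝ V]
    [FiniteDimensional ℝ V] [MeasurableSpace V] [BorelSpace V] {μ : Measure V}
    [μ.IsAddHaarMeasure] [NormedAddCommGroup E] {p : ℝ≥0∞} {f : V → E} (hf : MemLp f p μ) {c : ℝ}
    (hc : c ≠ 0) : MemLp (fun x => f (c • x)) p μ := by
  refine MemLp.comp_of_map ?_ (measurable_const_smul c).aemeasurable
  rw [Measure.map_addHaar_smul μ hc]
  exact hf.smul_measure ENNReal.ofReal_ne_top

theorem FT_two_pi_smul (f : Euc d → ℂ) (ξ : Euc d) : FT f ((2 * π) • ξ) = 𝓕 f ξ := by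
  rw [Real.fourier_eq', FT]
  refine integral_congr_ae (.of_forall fun x => ?_)
  simp only [inner_smul_right, smul_eq_mul]
  congr 2
  push_cast
  ring

theorem isFourierTransformOf_iff (hu : MemLp u 2 volume) (hv : MemLp v 2 volume) :
    IsFourierTransformOf u v ↔ hv.toLp v = (((2 * π) ^ d : ℝ) : ℂ) •
      𝓕 ((memLp_comp_smul hu two_pi_pos.ne').toLp fun x => u ((2 * π) • x)) := by
  have hu₂ := memLp_comp_smul hu two_pi_pos.ne'
  set u₂ := hu₂.toLp fun x => u ((2 * π) • x)
  have hspectral (g : SchwartzMap (Euc d) ℂ) : ∫ ξ, g ξ • hv.toLp v ξ = ∫ ξ, v ξ * g ξ := by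
    refine integral_congr_ae (hv.coeFn_toLp.mono fun ξ hξ => ?_)
    simp only [hξ, smul_eq_mul, mul_comm]
  have hspatial (g : SchwartzMap (Euc d) ℂ) :
      ∫ x, 𝓕 g x • ((((2 * π) ^ d : ℝ) : ℂ) • u₂ : Lp ℂ 2 volume) x = ∫ x, u x * FT g x := by
    calc _ = ∫ x, (((2 * π) ^ d : ℝ) : ℂ) * (u ((2 * π) • x) * FT g ((2 * π) • x)) := by
          refine integral_congr_ae ?_
          filter_upwards [hu₂.coeFn_toLp, Lp.coeFn_smul (((2 * π) ^ d : ℝ) : ℂ) u₂]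
            with x hx hsmul
          rw [hsmul, Pi.smul_apply, hx, FT_two_pi_smul, SchwartzMap.fourier_coe]
          simp only [smul_eq_mul]
          ring
      _ = ∫ x, u x * FT g x := by
          rw [integral_const_mul, Measure.integral_comp_smul volume (fun x => u x * FT g x),
            finrank_euclideanSpace_fin, abs_of_pos (by positivity), ← Complex.real_smul,
            smul_smul, mul_inv_cancel₀ (by positivity), one_smul]
  have hinj := LinearMap.ker_eq_bot.1 (Lp.ker_toTemperedDistributionCLM_eq_bot (F := ℂ) (p := 2)
    (μ := (volume : Measure (Euc d))))
  rw [← hinj.eq_iff, ← fourier_smul]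
  simp only [ContinuousLinearMap.coe_coe, Lp.toTemperedDistributionCLM_apply,
    ← Lp.fourier_toTemperedDistribution_eq, DFunLike.ext_iff, TemperedDistribution.fourier_apply,
    Lp.toTemperedDistribution_apply, hspectral, hspatial, IsFourierTransformOf]

theorem isFourierTransformOf_sub (hu : MemLp u 2 volume) (hv : MemLp v 2 volume)
    (h : IsFourierTransformOf u v) (hu' : MemLp u' 2 volume) (hv' : MemLp v' 2 volume)
    (h' : IsFourierTransformOf u' v') : IsFourierTransformOf (u - u') (v - v') := by
  rw [isFourierTransformOf_iff hu hv] at h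
  rw [isFourierTransformOf_iff hu' hv'] at h'
  rw [isFourierTransformOf_iff (hu.sub hu') (hv.sub hv'), MemLp.toLp_sub hv hv', h, h', ← smul_sub]
  congr 1
  exact (map_sub (Lp.fourierTransformₗᵢ (Euc d) ℂ) _ _).symm

/-- The measure `dξ / (2π)^d`, for which the Fourier transform is an isometry from `L²(dx)`. -/
def dualVolume (d : ℕ) : Measure (Euc d) := ENNReal.ofReal ((2 * π) ^ d)⁻¹ • volume

instance isAddHaarMeasure_dualVolume : (dualVolume d).IsAddHaarMeasure :=
  .smul volume (ENNReal.ofReal_pos.2 (by positivity)).ne' ENNReal.ofReal_ne_top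

theorem memLp_dualVolume {p : ℝ≥0∞} (hv : MemLp v p volume) : MemLp v p (dualVolume d) :=
  hv.smul_measure ENNReal.ofReal_ne_top

theorem integral_inner_dualVolume (hu : MemLp u 2 volume) (hv : MemLp v 2 volume)
    (h : IsFourierTransformOf u v) (hu' : MemLp u' 2 volume) (hv' : MemLp v' 2 volume)
    (h' : IsFourierTransformOf u' v') :
    ∫ ξ, inner ℂ (v ξ) (v' ξ) ∂dualVolume d = ∫ x, inner ℂ (u x) (u' x) := by
  rw [dualVolume, integral_smul_measure, integral_inner_eq_inner_toLp hv hv',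
    (isFourierTransformOf_iff hu hv).1 h, (isFourierTransformOf_iff hu' hv').1 h',
    inner_smul_left, inner_smul_right, Lp.inner_fourier_eq, ← integral_inner_eq_inner_toLp,
    Measure.integral_comp_smul volume (fun x => inner ℂ (u x) (u' x)), finrank_euclideanSpace_fin,
    Complex.conj_ofReal, ENNReal.toReal_ofReal (by positivity), abs_of_pos (by positivity)]
  simp only [Complex.real_smul, Complex.ofReal_inv]
  field_simp

theorem FT_comp_add_right (f : Euc d → ℂ) (b x : Euc d) :
    FT (fun ξ => f (ξ + b)) x = Complex.exp (Complex.I * (⟪x, b⟫ : ℝ)) * FT f x := by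
  rw [FT, FT, ← integral_const_mul, ← integral_sub_right_eq_self _ b]
  refine integral_congr_ae (.of_forall fun ξ => ?_)
  simp only [sub_add_cancel, ← mul_assoc, ← Complex.exp_add, inner_sub_left, real_inner_comm x b]
  congr 2
  push_cast
  ring

theorem isFourierTransformOf_modulation (h : IsFourierTransformOf u v) (b : Euc d) :
    IsFourierTransformOf (fun x => Complex.exp (Complex.I * (⟪x, b⟫ : ℝ)) * u x)
      (fun ξ => v (ξ - b)) := by
  intro g
  calc ∫ ξ, v (ξ - b) * g ξ = ∫ ξ, v ξ * SchwartzMap.compSubConstCLM ℂ (-b) g ξ := by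
        rw [← integral_add_right_eq_self (fun ξ => v (ξ - b) * g ξ) b]
        simp
    _ = ∫ x, u x * FT (fun ξ => g (ξ + b)) x := by
        rw [h]
        simp [FT]
    _ = _ := by
        simp only [FT_comp_add_right, mul_left_comm, mul_assoc]

theorem charFun_bornMeasure_eq_autocorrelation (hu : MemLp u 2 volume) (hv : MemLp v 2 volume)
    (h : IsFourierTransformOf u v) (b : Euc d) :
    charFun (bornMeasure volume u) b = ∫ ξ, inner ℂ (v ξ) (v (ξ - b)) ∂dualVolume d := by
  have hv' : MemLp (fun ξ => v (ξ - b)) 2 volume :=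
    hv.comp_measurePreserving (measurePreserving_sub_right volume b)
  have hu' := memLp_exp_I_mul hu (r := fun x => ⟪x, b⟫) (by fun_prop)
  rw [integral_inner_dualVolume hu hv h hu' hv' (isFourierTransformOf_modulation h b)]
  simpa using charFun_map_bornMeasure hu.1 aemeasurable_id b

end FourierTransform

section DispersiveEvolution

variable {d : ℕ} {P : Euc d → ℝ} {F : Euc d → ℂ} {w : ℝ → Euc d → ℂ}

/-- `w t` is an `L²` representative of `e^{itP(D)}u₀` for every `t`, where `F` is the Fourier
transform of `u₀`. -/
def IsDispersiveEvolution (P : Euc d → ℝ) (F : Euc d → ℂ) (w : ℝ → Euc d → ℂ) : Prop :=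
  ∀ t, MemLp (w t) 2 volume ∧ IsFourierTransformOf (w t) (evolvedSpectrum P F t)

/-- The velocity `-∇P(ξ)` at which the frequency `ξ` of `e^{itP(D)}u₀` travels. -/
def groupVelocity (P : Euc d → ℝ) (ξ : Euc d) : Euc d := -gradient P ξ

theorem IsDispersiveEvolution.sub (hP : AEMeasurable P) {F' : Euc d → ℂ} {w' : ℝ → Euc d → ℂ}
    (hF : MemLp F 2 volume) (hw : IsDispersiveEvolution P F w) (hF' : MemLp F' 2 volume)
    (hw' : IsDispersiveEvolution P F' w') : IsDispersiveEvolution P (F - F') (w - w') := by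
  refine fun t => ⟨(hw t).1.sub (hw' t).1, ?_⟩
  have hspectrum : evolvedSpectrum P (F - F') t = evolvedSpectrum P F t - evolvedSpectrum P F' t :=
    funext fun ξ => mul_sub _ _ _
  rw [hspectrum]
  exact isFourierTransformOf_sub (hw t).1 (memLp_evolvedSpectrum hP hF t) (hw t).2
    (hw' t).1 (memLp_evolvedSpectrum hP hF' t) (hw' t).2

theorem measurable_groupVelocity (P : Euc d → ℝ) : Measurable (groupVelocity P) :=
  ((InnerProductSpace.toDual ℝ (Euc d)).symm.continuous.measurable.comp
    (measurable_fderiv ℝ P)).neg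

theorem fderiv_neg_eq_inner_groupVelocity (P : Euc d → ℝ) (ξ a : Euc d) :
    fderiv ℝ P ξ (-a) = ⟪groupVelocity P ξ, a⟫ := by
  rw [map_neg, groupVelocity, inner_neg_left, gradient, InnerProductSpace.toDual_symm_apply]

theorem tendsto_charFun_rescaled (hP : ∀ᵐ ξ : Euc d, DifferentiableAt ℝ P ξ)
    (hF : MemLp F 2 volume) (hw : IsDispersiveEvolution P F w) (a : Euc d) :
    Tendsto (fun t : ℝ => charFun ((bornMeasure volume (w t)).map (t⁻¹ • ·)) a)
      (Bornology.cobounded ℝ)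
      (𝓝 (charFun ((bornMeasure (dualVolume d) F).map (groupVelocity P)) a)) := by
  have hP' : ∀ᵐ ξ ∂dualVolume d, DifferentiableAt ℝ P ξ := Measure.ae_smul_measure hP _
  have hFd := memLp_dualVolume hF
  have hwave (t : ℝ) : MemLp (evolvedSpectrum P F t) 2 volume :=
    memLp_evolvedSpectrum (aemeasurable_of_ae_differentiableAt hP) hF t
  simp only [charFun_map_bornMeasure hFd.1 (measurable_groupVelocity P).aemeasurable,
    charFun_map_smul, ← fderiv_neg_eq_inner_groupVelocity,
    fun t => charFun_bornMeasure_eq_autocorrelation (hw t).1 (hwave t) (hw t).2]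
  exact tendsto_autocorrelation_evolvedSpectrum hP' hFd a

theorem tendsto_eLpNorm_indicator_rescaled_of_isClosed
    (hP : ∀ᵐ ξ : Euc d, DifferentiableAt ℝ P ξ) (hF : MemLp F 2 volume)
    (hw : IsDispersiveEvolution P F w) {C : Set (Euc d)} (hC : IsClosed C)
    (hFC : ∀ᵐ ξ, groupVelocity P ξ ∈ C → F ξ = 0) :
    Tendsto (fun t : ℝ => eLpNorm (((t⁻¹ • ·) ⁻¹' C).indicator (w t)) 2 volume)
      (Bornology.cobounded ℝ) (𝓝 0) := by
  have := isCountablyGenerated_cobounded (V := ℝ)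
  have (t : ℝ) : IsFiniteMeasure (bornMeasure volume (w t)) :=
    isFiniteMeasure_bornMeasure (hw t).1
  have : IsFiniteMeasure (bornMeasure (dualVolume d) F) :=
    isFiniteMeasure_bornMeasure (memLp_dualVolume hF)
  have hlimit_null : (bornMeasure (dualVolume d) F).map (groupVelocity P) C = 0 := by
    rw [Measure.map_apply (measurable_groupVelocity P) hC.measurableSet]
    exact bornMeasure_eq_zero (measurable_groupVelocity P hC.measurableSet).nullMeasurableSet
      (Measure.ae_smul_measure hFC _)
  have hmass (t : ℝ) : (bornMeasure volume (w t)).map (t⁻¹ • ·) C =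
      eLpNorm (((t⁻¹ • ·) ⁻¹' C).indicator (w t)) 2 volume ^ 2 := by
    have hscale : Measurable fun x : Euc d => t⁻¹ • x := measurable_const_smul _
    rw [Measure.map_apply hscale hC.measurableSet, bornMeasure_apply _ (hscale hC.measurableSet)]
  have h := tendsto_measure_zero_of_tendsto_charFun (tendsto_charFun_rescaled hP hF hw) hC
    hlimit_null
  simp only [hmass] at h
  simpa [← ENNReal.rpow_natCast_mul] using h.ennrpow_const (1 / 2)

theorem tendsto_eLpNorm_indicator_rescaled_closure_compl
    (hP : ∀ᵐ ξ : Euc d, DifferentiableAt ℝ P ξ) (hF : MemLp F 2 volume) {A : Set (Euc d)}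
    (hA : ∀ᵐ ξ, groupVelocity P ξ ∉ frontier A) (hAm : NullMeasurableSet (groupVelocity P ⁻¹' A))
    (hw : IsDispersiveEvolution P ((groupVelocity P ⁻¹' A).indicator F) w) :
    Tendsto (fun t : ℝ => eLpNorm (((t⁻¹ • ·) ⁻¹' closure Aᶜ).indicator (w t)) 2 volume)
      (Bornology.cobounded ℝ) (𝓝 0) := by
  have hFA := memLp_indicator₀ hF hAm
  refine tendsto_eLpNorm_indicator_rescaled_of_isClosed hP hFA hw isClosed_closure ?_
  filter_upwards [hA] with ξ hξ hcompl
  refine Set.indicator_of_notMem (fun hmem => hξ ?_) F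
  rw [frontier_eq_closure_inter_closure]
  exact ⟨subset_closure hmem, hcompl⟩

theorem tendsto_eLpNorm_indicator_rescaled_sub
    (hP : ∀ᵐ ξ : Euc d, DifferentiableAt ℝ P ξ) (hF : MemLp F 2 volume) {A : Set (Euc d)}
    (hA : ∀ᵐ ξ, groupVelocity P ξ ∉ frontier A) (hAm : NullMeasurableSet (groupVelocity P ⁻¹' A))
    {u m : ℝ → Euc d → ℂ} (hu : IsDispersiveEvolution P F u)
    (hm : IsDispersiveEvolution P ((groupVelocity P ⁻¹' A).indicator F) m) :
    Tendsto (fun t : ℝ => eLpNorm (((t⁻¹ • ·) ⁻¹' A).indicator (u t) - m t) 2 volume)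
      (Bornology.cobounded ℝ) (𝓝 0) := by
  have hr : IsDispersiveEvolution P ((groupVelocity P ⁻¹' Aᶜ).indicator F) (u - m) := by
    rw [Set.preimage_compl, Set.indicator_compl]
    exact .sub (aemeasurable_of_ae_differentiableAt hP) hF hu (memLp_indicator₀ hF hAm) hm
  have hinside := tendsto_eLpNorm_indicator_rescaled_closure_compl hP hF (A := Aᶜ)
    (by rwa [frontier_compl]) hAm.compl hr
  have houtside := tendsto_eLpNorm_indicator_rescaled_closure_compl hP hF hA hAm hm
  have hclosure (t : ℝ) (B : Set (Euc d)) : MeasurableSet ((t⁻¹ • ·) ⁻¹' closure B : Set (Euc d)) :=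
    isClosed_closure.measurableSet.preimage (measurable_const_smul _)
  rw [compl_compl] at hinside
  refine tendsto_of_tendsto_of_tendsto_of_le_of_le tendsto_const_nhds
    (by simpa only [add_zero] using hinside.add houtside) (fun t => zero_le) fun t => ?_
  exact eLpNorm_indicator_sub_le one_le_two (hu t).1.1 (hm t).1.1 (hclosure t A)
    (hclosure t Aᶜ) (fun x hx => subset_closure hx) fun x hx => subset_closure hx

end DispersiveEvolution

theorem ae_differentiableAt_of_contDiffOn_compl_singleton {V W : Type*} [NormedAddCommGroup V]
    [NormedSpace ℝ V] [NormedAddCommGroup W] [NormedSpace ℝ W] [MeasurableSpace V]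
    {μ : Measure V} [NullSingletonClass μ] {f : V → W} {a : V} {n : WithTop ℕ∞} (hn : n ≠ 0)
    (hf : ContDiffOn ℝ n f {a}ᶜ) : ∀ᵐ x ∂μ, DifferentiableAt ℝ f x := by
  filter_upwards [Measure.ae_ne μ a] with x hx
  exact (hf.contDiffAt (isOpen_compl_singleton.mem_nhds hx)).differentiableAt hn

theorem statement19_general {d : ℕ} {P : Euc d → ℝ} (hP : ∀ᵐ ξ : Euc d, DifferentiableAt ℝ P ξ)
    (hac : Measure.map (fun ξ : Euc d => gradient P ξ) (volume : Measure (Euc d)) ≪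
      (volume : Measure (Euc d)))
    {E : Set (Euc d)} (hfrontE : (volume : Measure (Euc d)) (frontier E) = 0)
    {F : Euc d → ℂ} (hF : MemLp F 2 (volume : Measure (Euc d))) {ut : ℝ → Euc d → ℂ}
    (hut : ∀ t : ℝ, MemLp (ut t) 2 (volume : Measure (Euc d)) ∧
      IsFourierTransformOf (ut t)
        (fun ξ => Complex.exp (Complex.I * ((t * P ξ : ℝ) : ℂ)) * F ξ))
    {mt : ℝ → Euc d → ℂ}
    (hmt : ∀ t : ℝ, MemLp (mt t) 2 (volume : Measure (Euc d)) ∧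
      IsFourierTransformOf (mt t)
        (fun ξ => (if -gradient P ξ ∈ E then (1:ℂ) else 0) *
          Complex.exp (Complex.I * ((t * P ξ : ℝ) : ℂ)) * F ξ)) :
    Tendsto (fun t : ℝ =>
        eLpNorm (fun x : Euc d =>
          (if t⁻¹ • x ∈ E then (1:ℂ) else 0) * ut t x - mt t x) 2
          (volume : Measure (Euc d))) (Bornology.cobounded ℝ) (𝓝 0) := by
  have hvelocity : Measure.QuasiMeasurePreserving (groupVelocity P) volume volume :=
    (Measure.measurePreserving_neg volume).quasiMeasurePreserving.comp
      ⟨measurable_neg_iff.1 (measurable_groupVelocity P), hac⟩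
  have hfront : ∀ᵐ ξ, groupVelocity P ξ ∉ frontier E :=
    hvelocity.ae (measure_eq_zero_iff_ae_notMem.1 hfrontE)
  have hEm : NullMeasurableSet (groupVelocity P ⁻¹' E) :=
    (nullMeasurableSet_of_null_frontier hfrontE).preimage hvelocity
  have hm : IsDispersiveEvolution P ((groupVelocity P ⁻¹' E).indicator F) mt := by
    intro t
    convert hmt t using 2
    ext ξ
    simp [evolvedSpectrum, groupVelocity, Set.indicator_apply]
  have h := tendsto_eLpNorm_indicator_rescaled_sub hP hF hfront hEm hut hm
  refine h.congr fun t => congrArg (eLpNorm · 2 volume) (funext fun x => ?_)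
  simp [Set.indicator_apply]

/-- Lemma D.1, `1_E ∈ 𝒢`: if the pushforward of the Lebesgue measure
under `∇P` is absolutely continuous and `∂E` is Lebesgue-null, then for every `u₀ ∈ L²`,
`‖1_E(x/t) u(t) − 1_E(−∇P(D)) u(t)‖_{L²} → 0` as `t → ±∞`, where `u(t) = e^{itP(D)}u₀`.
The solution `u(t)` and the Fourier-multiplied solution `m(t) = M_E u(t)` are described by
`L²` representatives `ut t`, `mt t` together with their Fourier transforms. -/
theorem statement19
    (d : ℕ) (hd : 1 ≤ d)
    (P : Euc d → ℝ) (hP : ContDiffOn ℝ (⊤ : ℕ∞) P {(0 : Euc d)}ᶜ)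
    (hac : Measure.map (fun ξ : Euc d => gradient P ξ) (volume : Measure (Euc d)) ≪
      (volume : Measure (Euc d)))
    (E : Set (Euc d)) (hE : MeasurableSet E)
    (hfrontE : (volume : Measure (Euc d)) (frontier E) = 0)
    (u₀ Fu₀ : Euc d → ℂ)
    (hu₀ : MemLp u₀ 2 (volume : Measure (Euc d)))
    (hFu₀mem : MemLp Fu₀ 2 (volume : Measure (Euc d)))
    (hFu₀ : IsFourierTransformOf u₀ Fu₀)
    -- `u(t) = e^{itP(D)}u₀`
    (ut : ℝ → Euc d → ℂ)
    (hut : ∀ t : ℝ, MemLp (ut t) 2 (volume : Measure (Euc d)) ∧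
      IsFourierTransformOf (ut t)
        (fun ξ => Complex.exp (Complex.I * ((t * P ξ : ℝ) : ℂ)) * Fu₀ ξ))
    -- `m(t) = M_E u(t)`, the Fourier multiplier by `1_E(−∇P(ξ))` applied to `u(t)`
    (mt : ℝ → Euc d → ℂ)
    (hmt : ∀ t : ℝ, MemLp (mt t) 2 (volume : Measure (Euc d)) ∧
      IsFourierTransformOf (mt t)
        (fun ξ => (if -gradient P ξ ∈ E then (1:ℂ) else 0) *
          Complex.exp (Complex.I * ((t * P ξ : ℝ) : ℂ)) * Fu₀ ξ)) :
    Tendsto (fun t : ℝ =>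
        eLpNorm (fun x : Euc d =>
          (if t⁻¹ • x ∈ E then (1:ℂ) else 0) * ut t x - mt t x) 2
          (volume : Measure (Euc d))) atTop (𝓝 0) ∧
    Tendsto (fun t : ℝ =>
        eLpNorm (fun x : Euc d =>
          (if t⁻¹ • x ∈ E then (1:ℂ) else 0) * ut t x - mt t x) 2
          (volume : Measure (Euc d))) atBot (𝓝 0) := by
  have : Nonempty (Fin d) := ⟨⟨0, hd⟩⟩
  have h := statement19_general
    (ae_differentiableAt_of_contDiffOn_compl_singleton (by simp) hP) hac hfrontE hFu₀mem hut hmt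
  exact ⟨h.mono_left IsOrderBornology.atTop_le_cobounded,
    h.mono_left IsOrderBornology.atBot_le_cobounded⟩
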